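/- Let n ≥ 1, let G ∈ 𝒢_{n,1} be reduced, and let G_p be one of its nontrivial strong components (a directed cycle of length ℓ_p) with distinguished node α_{p₀}. Then for every node α_i ∈ V_p⁺ there is a unique path τ_{α_{p₀}α_i} in G from α_{p₀} to α_i, and every walk τ from β to α_i is the concatenation τ_{βα_{p₀}} · G_p^m · τ_{α_{p₀}α_i} for some m ∈ ℕ, where τ_{βα_{p₀}} is the unique path from β to α_{p₀} and G_p^m denotes the closed walk traversing the cycle G_p exactly m times starting and ending at α_{p₀} (in particular, the length of τ equals dep(α_i) + m·ℓ_p). -/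

import Mathlib

open MeasureTheory

/-- Node type for digraphs in `𝒢_{n,1}`: `none` is the control node `β`,
`some i` is the state node `α_i`. -/
abbrev Node (n : ℕ) := Option (Fin n)

/-- `w` is a walk of length `k` from `u` to `v` in the digraph with edge set `E`. -/
def IsWalk {V : Type*} (E : Set (V × V)) (k : ℕ) (w : ℕ → V) (u v : V) : Prop :=
  w 0 = u ∧ w k = v ∧ ∀ t < k, (w t, w (t + 1)) ∈ E

/-- A path is a walk with no repeated node. -/
def IsPath {V : Type*} (E : Set (V × V)) (k : ℕ) (w : ℕ → V) (u v : V) : Prop :=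
  IsWalk E k w u v ∧ ∀ s ≤ k, ∀ t ≤ k, w s = w t → s = t

/-- A cycle of length `k ≥ 1` from `u` to itself, all nodes pairwise distinct except
the coinciding endpoints. -/
def IsCycle {V : Type*} (E : Set (V × V)) (k : ℕ) (w : ℕ → V) (u : V) : Prop :=
  1 ≤ k ∧ IsWalk E k w u u ∧ ∀ s < k, ∀ t < k, w s = w t → s = t

def Reachable {V : Type*} (E : Set (V × V)) (u v : V) : Prop :=
  ∃ k w, IsWalk E k w u v

/-- `u` lies on a cycle of the digraph. -/
def OnCycle {V : Type*} (E : Set (V × V)) (u : V) : Prop :=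
  ∃ k w, IsCycle E k w u

def WeaklyConnected {V : Type*} (E : Set (V × V)) : Prop :=
  ∀ u v : V, ∃ (k : ℕ) (w : ℕ → V), w 0 = u ∧ w k = v ∧
    ∀ t < k, (w t, w (t + 1)) ∈ E ∨ (w (t + 1), w t) ∈ E

/-- Membership in the class `𝒢_{n,1}`: no edge ends at `β` and the digraph is
weakly connected. -/
def MemG (n : ℕ) (E : Set (Node n × Node n)) : Prop :=
  (∀ e ∈ E, e.2 ≠ (none : Node n)) ∧ WeaklyConnected E

/-- `V⁺_cyc`: nodes reachable by a walk from some node lying on a cycle. -/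
def CycSucc {V : Type*} (E : Set (V × V)) : Set V :=
  {v | ∃ u, OnCycle E u ∧ Reachable E u v}

/-- The node set of the core relative to a node set `N`: `N \ V⁺_cyc`. -/
def CoreOn {W : Type*} (N : Set W) (F : Set (W × W)) : Set W := N \ CycSucc F

/-- The node set `V*` of the core `G*` of `G`. -/
def CoreNodes (n : ℕ) (E : Set (Node n × Node n)) : Set (Node n) :=
  CoreOn Set.univ E

/-- The core of `G` contains a directed spanning path: a path of `G` whose node set
is exactly `V*`. -/
def HasCoreSpanningPath (n : ℕ) (E : Set (Node n × Node n)) : Prop :=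
  ∃ (k : ℕ) (w : ℕ → Node n) (u v : Node n), IsPath E k w u v ∧
    {x | ∃ t ≤ k, w t = x} = CoreNodes n E

/-- A compliant pair `(A, b) ∈ 𝕍(G)`: bounded continuous, with the sparsity
pattern dictated by the edge set `E`. -/
def Compliant {n : ℕ} {S : Type*} [TopologicalSpace S] (E : Set (Node n × Node n))
    (A : S → Fin n → Fin n → ℝ) (b : S → Fin n → ℝ) : Prop :=
  Continuous A ∧ Continuous b ∧
  (∃ C, ∀ σ i j, |A σ i j| ≤ C) ∧ (∃ C, ∀ σ i, |b σ i| ≤ C) ∧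
  (∀ σ (i j : Fin n), ((some j : Node n), (some i : Node n)) ∉ E → A σ i j = 0) ∧
  (∀ σ (i : Fin n), ((none : Node n), (some i : Node n)) ∉ E → b σ i = 0)

/-- The averaged-controllability rank criterion: the span of the Bochner integrals
`∫ A(σ)^k b(σ) dμ`, `k ∈ ℕ`, is all of `ℝⁿ`. -/
def RankCriterion {n : ℕ} {S : Type*} [MeasurableSpace S]
    (μ : Measure S) (A : S → Fin n → Fin n → ℝ) (b : S → Fin n → ℝ) : Prop :=
  Submodule.span ℝ {x : Fin n → ℝ |
    ∃ k : ℕ, x = ∫ σ, (Matrix.of (A σ) ^ k).mulVec (b σ) ∂μ} = ⊤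

/-- `S` is a topological manifold of dimension `d`. -/
def IsTopManifold (d : ℕ) (S : Type*) [TopologicalSpace S] : Prop :=
  ∀ x : S, ∃ U : Set S, IsOpen U ∧ x ∈ U ∧
    ∃ W : Set (EuclideanSpace ℝ (Fin d)), IsOpen W ∧ Nonempty (↥U ≃ₜ ↥W)

/-- The support of `μ` contains a nonempty open set. -/
def SupportHasOpen {S : Type*} [TopologicalSpace S] [MeasurableSpace S]
    (μ : Measure S) : Prop :=
  ∃ U : Set S, IsOpen U ∧ U.Nonempty ∧ ∀ W ⊆ U, IsOpen W → W.Nonempty → 0 < μ W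

/-- There is exactly one path from `u` to `v`. -/
def UniquePathFrom {V : Type*} (E : Set (V × V)) (u v : V) : Prop :=
  (∃ k w, IsPath E k w u v) ∧
  ∀ (k : ℕ) (w : ℕ → V) (k' : ℕ) (w' : ℕ → V),
    IsPath E k w u v → IsPath E k' w' u v → k = k' ∧ ∀ t ≤ k, w t = w' t

/-- A directed tree on the node set `N`: there is a unique root, from which every node
is reachable by a unique path. -/
def IsDirectedTree {W : Type*} (N : Set W) (F : Set (W × W)) : Prop :=
  ∃ r ∈ N, (∀ v ∈ N, UniquePathFrom F r v) ∧
    (∀ r' ∈ N, (∀ v ∈ N, Reachable F r' v) → r' = r)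

/-- The strong component of `u`: nodes mutually reachable with `u`. -/
def StrongComp {V : Type*} (E : Set (V × V)) (u : V) : Set V :=
  {v | Reachable E u v ∧ Reachable E v u}

/-- The nodes of the skeleton graph (condensation): the strong components. -/
def SkelNodes {V : Type*} (E : Set (V × V)) : Set (Set V) :=
  {C | ∃ u, C = StrongComp E u}

/-- The edges of the skeleton graph: `(C, C')` is an edge whenever some edge of `E`
goes from a node of `C` to a node of `C'`. -/
def SkelEdges {V : Type*} (E : Set (V × V)) : Set (Set V × Set V) :=
  {p | p.1 ∈ SkelNodes E ∧ p.2 ∈ SkelNodes E ∧ ∃ u ∈ p.1, ∃ v ∈ p.2, (u, v) ∈ E}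

/-- The induced subgraph on `N` (w.r.t. the ambient edge set `F`) is a directed path:
its nodes can be ordered `w 0, …, w r` so that its edges are exactly the consecutive
pairs. -/
def IsPathGraphOn {W : Type*} (N : Set W) (F : Set (W × W)) : Prop :=
  ∃ (r : ℕ) (w : ℕ → W), (∀ s ≤ r, ∀ t ≤ r, w s = w t → s = t) ∧
    {x | ∃ t ≤ r, w t = x} = N ∧
    (∀ p : W × W, (p ∈ F ∧ p.1 ∈ N ∧ p.2 ∈ N) ↔ ∃ t < r, p = (w t, w (t + 1)))

/-- The induced subgraph on `C` is a single directed cycle: its nodes can be cyclically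
ordered so that its edges are exactly the consecutive pairs. -/
def IsSingleCycleOn {V : Type*} (C : Set V) (E : Set (V × V)) : Prop :=
  ∃ (l : ℕ) (w : ℕ → V), 1 ≤ l ∧ (∀ s < l, ∀ t < l, w s = w t → s = t) ∧
    {x | ∃ t < l, w t = x} = C ∧
    (∀ p : V × V, (p ∈ E ∧ p.1 ∈ C ∧ p.2 ∈ C) ↔ ∃ t < l, p = (w t, w ((t + 1) % l)))

/-- `G ∈ 𝒢_{n,1}` is reduced (Definition 5 of the paper): (1) the skeleton graph `S`
with self-loops removed is a directed tree and the core `S*` of `S` is a directed path;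
(2) every edge of `S` between distinct components comes from a unique edge of `G`;
(3) every node of `S` with a self-loop is an out-neighbor of `S*`, and every nontrivial
strong component of `G` is a single directed cycle. -/
def ReducedGraph (n : ℕ) (E : Set (Node n × Node n)) : Prop :=
  MemG n E ∧
  IsDirectedTree (SkelNodes E) {p ∈ SkelEdges E | p.1 ≠ p.2} ∧
  IsPathGraphOn (CoreOn (SkelNodes E) (SkelEdges E)) (SkelEdges E) ∧
  (∀ p ∈ SkelEdges E, p.1 ≠ p.2 →
    ∃! e : Node n × Node n, e ∈ E ∧ e.1 ∈ p.1 ∧ e.2 ∈ p.2) ∧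
  (∀ C : Set (Node n), (C, C) ∈ SkelEdges E →
    (∃ C' ∈ CoreOn (SkelNodes E) (SkelEdges E), (C', C) ∈ SkelEdges E) ∧
    IsSingleCycleOn C E)

theorem aux_back {V : Type*} {E : Set (V × V)} {k k' N : ℕ} {w w' : ℕ → V}
    (hw : ∀ t < k, (w t, w (t + 1)) ∈ E) (hw' : ∀ t < k', (w' t, w' (t + 1)) ∈ E)
    (he : w k = w' k') (hN : N ≤ k) (hN' : N ≤ k')
    (hu : ∀ j < N, ∀ y y', (y, w' (k' - j)) ∈ E → (y', w' (k' - j)) ∈ E → y = y') :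
    ∀ j ≤ N, w (k - j) = w' (k' - j) := by
  intro j
  induction j with
  | zero => intro _; simpa using he
  | succ j ih =>
    intro hj
    have h1 := ih (by omega)
    have h2 := hw (k - (j + 1)) (by omega)
    have h3 := hw' (k' - (j + 1)) (by omega)
    rw [show k - (j + 1) + 1 = k - j by omega, h1] at h2
    rw [show k' - (j + 1) + 1 = k' - j by omega] at h3
    exact hu j (by omega) _ _ h2 h3

theorem aux_refl {V : Type*} (E : Set (V × V)) (u : V) : Reachable E u u :=
  ⟨0, fun _ => u, rfl, rfl, by simp⟩

theorem aux_snoc {V : Type*} {E : Set (V × V)} {k : ℕ} {w : ℕ → V} {a b c : V}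
    (hw : IsWalk E k w a b) (h : (b, c) ∈ E) :
    IsWalk E (k + 1) (fun t => if t ≤ k then w t else c) a c := by
  obtain ⟨h0, hk, hs⟩ := hw
  refine ⟨by simpa using h0, by simp, ?_⟩
  intro t ht
  rcases Nat.lt_or_ge t k with h1 | h1
  · have := hs t h1
    simpa [h1.le, Nat.succ_le_of_lt h1] using this
  · obtain rfl : t = k := by omega
    simpa [hk] using h

theorem aux_step {V : Type*} {E : Set (V × V)} {a b c : V}
    (hw : Reachable E a b) (h : (b, c) ∈ E) : Reachable E a c := by
  obtain ⟨k, w, hw⟩ := hw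
  exact ⟨_, _, aux_snoc hw h⟩

theorem aux_walk_reach {V : Type*} {E : Set (V × V)} {k : ℕ} {w : ℕ → V}
    (hs : ∀ t < k, (w t, w (t + 1)) ∈ E) {i j : ℕ} (hij : i ≤ j) (hj : j ≤ k) :
    Reachable E (w i) (w j) := by
  refine ⟨j - i, fun t => w (i + t), by simp, by simp [Nat.add_sub_cancel' hij], ?_⟩
  intro t ht
  exact hs (i + t) (by omega)

theorem aux_trans {V : Type*} {E : Set (V × V)} {a b c : V}
    (h1 : Reachable E a b) (h2 : Reachable E b c) : Reachable E a c := by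
  obtain ⟨k, w, h0, hk, hs⟩ := h2
  induction k generalizing c with
  | zero => rw [← hk, h0]; exact h1
  | succ k ih =>
    have := ih rfl (fun t ht => hs t (by omega))
    have h := hs k (by omega)
    rw [hk] at h
    exact aux_step this h

theorem aux_edge {V : Type*} {E : Set (V × V)} {a b : V} (h : (a, b) ∈ E) :
    Reachable E a b := aux_step (aux_refl E a) h

theorem aux_path {V : Type*} {E : Set (V × V)} {a b : V} (h : Reachable E a b) :
    ∃ k w, IsPath E k w a b := by
  classical
  have hk := Nat.find_spec h
  have hmin := fun m => @Nat.find_min _ _ h m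
  set k := Nat.find h
  obtain ⟨w, hw⟩ := hk
  obtain ⟨h0, hk, hs⟩ := hw
  have key : ∀ s t, s < t → t ≤ k → w s ≠ w t := by
    intro s t hst ht he
    refine hmin (k - (t - s)) (by omega)
      ⟨fun i => if i ≤ s then w i else w (i + (t - s)), by simpa using h0, ?_, ?_⟩
    · by_cases h : k - (t - s) ≤ s
      · have h1 : k - (t - s) = s := by omega
        have h2 : t = k := by omega
        simp only [h, if_true]
        rw [h1, he, h2, hk]
      · simp only [h, if_false]
        rw [show k - (t - s) + (t - s) = k by omega, hk]
    · intro i hi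
      rcases lt_trichotomy i s with h | h | h
      · have := hs i (by omega)
        simpa [h.le, Nat.succ_le_of_lt h] using this
      · subst h
        have := hs t (by omega)
        rw [← he] at this
        simp only [le_refl, if_true, show ¬ (i + 1 ≤ i) by omega, if_false]
        rw [show i + 1 + (t - i) = t + 1 by omega]
        exact this
      · have := hs (i + (t - s)) (by omega)
        simp only [show ¬ (i ≤ s) by omega, if_false, show ¬ (i + 1 ≤ s) by omega]
        rw [show i + 1 + (t - s) = i + (t - s) + 1 by omega]
        exact this
  refine ⟨k, w, ⟨h0, hk, hs⟩, ?_⟩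
  intro s hs' t ht he
  rcases lt_trichotomy s t with h | h | h
  · exact absurd he (key s t h ht)
  · exact h
  · exact absurd he.symm (key t s h hs')

theorem aux_mem {V : Type*} (E : Set (V × V)) (u : V) : u ∈ StrongComp E u :=
  ⟨aux_refl E u, aux_refl E u⟩

theorem aux_comp_eq {V : Type*} {E : Set (V × V)} {u v : V} (h : v ∈ StrongComp E u) :
    StrongComp E v = StrongComp E u := by
  ext x
  exact ⟨fun hx => ⟨aux_trans h.1 hx.1, aux_trans hx.2 h.2⟩,
    fun hx => ⟨aux_trans h.2 hx.1, aux_trans hx.2 h.1⟩⟩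

theorem aux_skel_edge {V : Type*} {E : Set (V × V)} {u v : V} (h : (u, v) ∈ E) :
    (StrongComp E u, StrongComp E v) ∈ SkelEdges E :=
  ⟨⟨u, rfl⟩, ⟨v, rfl⟩, u, aux_mem E u, v, aux_mem E v, h⟩

theorem aux_skel_reach {V : Type*} {E : Set (V × V)} {u v : V} (h : Reachable E u v) :
    Reachable (SkelEdges E) (StrongComp E u) (StrongComp E v) := by
  obtain ⟨k, w, h0, hk, hs⟩ := h
  exact ⟨k, fun t => StrongComp E (w t), by simp [h0], by simp [hk],
    fun t ht => aux_skel_edge (hs t ht)⟩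

theorem aux_of_skel {V : Type*} {E : Set (V × V)} {A B : Set V} (hA : A ∈ SkelNodes E)
    (h : Reachable (SkelEdges E) A B) : ∀ a ∈ A, ∀ b ∈ B, Reachable E a b := by
  obtain ⟨k, w, h0, hk, hs⟩ := h
  induction k generalizing B with
  | zero =>
    obtain ⟨u, rfl⟩ := hA
    obtain rfl : StrongComp E u = B := h0.symm.trans hk
    intro a ha b hb
    exact aux_trans ha.2 hb.1
  | succ k ih =>
    intro a ha b hb
    have ih := ih rfl (fun t ht => hs t (by omega)) a ha
    obtain ⟨_, ⟨z, hz⟩, x, hx, y, hy, hxy⟩ := hs k (by omega)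
    simp only [hk] at hz hy
    subst hz
    exact aux_trans (aux_step (ih x hx) hxy) (aux_trans hy.2 hb.1)

theorem aux_indeg {V : Type*} {E : Set (V × V)}
    (hT : IsDirectedTree (SkelNodes E) {p ∈ SkelEdges E | p.1 ≠ p.2})
    (hE : ∀ p ∈ SkelEdges E, p.1 ≠ p.2 → ∃! e : V × V, e ∈ E ∧ e.1 ∈ p.1 ∧ e.2 ∈ p.2)
    {x x' y y' : V} (hx : (y, x) ∈ E) (hx' : (y', x') ∈ E) (hxx : x' ∈ StrongComp E x)
    (hy : y ∉ StrongComp E x) (hy' : y' ∉ StrongComp E x) : y = y' ∧ x = x' := by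
  obtain ⟨r, hr, hup, -⟩ := hT
  have hne : ∀ z, z ∉ StrongComp E x → StrongComp E z ≠ StrongComp E x := by
    intro z hz he; exact hz (he ▸ aux_mem E z)
  have he := aux_skel_edge hx
  have he' := aux_skel_edge hx'
  rw [aux_comp_eq hxx] at he'
  have ext : ∀ z x1, (z, x1) ∈ E → x1 ∈ StrongComp E x → z ∉ StrongComp E x → ∃ k w,
      w k = StrongComp E z ∧
      IsPath {p ∈ SkelEdges E | p.1 ≠ p.2} (k + 1) w r (StrongComp E x) := by
    intro z x1 hz hx1 hzx
    obtain ⟨⟨k, w, hw, hinj⟩, -⟩ := hup (StrongComp E z) ⟨z, rfl⟩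
    have hed := aux_skel_edge hz
    rw [aux_comp_eq hx1] at hed
    refine ⟨k, fun t => if t ≤ k then w t else StrongComp E x, by simp [hw.2.1],
      aux_snoc hw ⟨hed, hne z hzx⟩, ?_⟩
    have hno : ∀ s ≤ k, w s ≠ StrongComp E x := by
      intro s hs he
      have h1 : Reachable (SkelEdges E) (w s) (w k) :=
        aux_walk_reach (fun t ht => (hw.2.2 t ht).1) hs le_rfl
      rw [he, hw.2.1] at h1
      have h2 := aux_of_skel ⟨x, rfl⟩ h1 x (aux_mem E x) z (aux_mem E z)
      exact hzx ⟨h2, aux_trans (aux_edge hz) hx1.2⟩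
    intro s hs t ht
    by_cases h1 : s ≤ k <;> by_cases h2 : t ≤ k
    · simpa [h1, h2] using hinj s h1 t h2
    · simp only [h1, h2, if_true, if_false]; intro h; exact absurd h (hno s h1)
    · simp only [h1, h2, if_true, if_false]; intro h; exact absurd h.symm (hno t h2)
    · intro _; omega
  obtain ⟨k, w, hk, hp⟩ := ext y x hx (aux_mem E x) hy
  obtain ⟨k', w', hk', hp'⟩ := ext y' x' hx' hxx hy'
  obtain ⟨e1, e2⟩ := (hup (StrongComp E x) ⟨x, rfl⟩).2 _ _ _ _ hp hp'
  obtain rfl : k = k' := by omega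
  have hYY : StrongComp E y = StrongComp E y' := by
    rw [← hk, ← hk']; exact e2 k (by omega)
  have := (hE _ he (hne y hy)).unique (y₁ := (y, x)) (y₂ := (y', x'))
    ⟨hx, aux_mem E y, aux_mem E x⟩ ⟨hx', hYY ▸ aux_mem E y', hxx⟩
  exact Prod.mk.inj this

theorem aux_enter {V : Type*} {E : Set (V × V)} {D : Set V} {a b : V}
    (h : Reachable E a b) (ha : a ∉ D) (hb : b ∈ D) :
    ∃ x y, (x, y) ∈ E ∧ x ∉ D ∧ y ∈ D ∧ Reachable E a x := by
  obtain ⟨k, w, h0, hk, hs⟩ := h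
  induction k generalizing b with
  | zero => exact absurd (h0.symm.trans hk ▸ hb) ha
  | succ k ih =>
    by_cases hD : w k ∈ D
    · exact ih hD rfl (fun t ht => hs t (by omega))
    · refine ⟨w k, w (k + 1), hs k (by omega), hD, hk ▸ hb, ?_⟩
      rw [← h0]
      exact aux_walk_reach hs (Nat.zero_le k) (by omega)

theorem aux_single_pred {V : Type*} {E : Set (V × V)} {C : Set V} (h : IsSingleCycleOn C E)
    {x y y' : V} (hx : x ∈ C) (hy : y ∈ C) (hy' : y' ∈ C) (e : (y, x) ∈ E) (e' : (y', x) ∈ E) :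
    y = y' := by
  obtain ⟨l, w, hl, hinj, -, hed⟩ := h
  obtain ⟨t, ht, h1⟩ := (hed (y, x)).1 ⟨e, hy, hx⟩
  obtain ⟨s, hs, h2⟩ := (hed (y', x)).1 ⟨e', hy', hx⟩
  obtain ⟨h1, h3⟩ := Prod.mk.inj h1
  obtain ⟨h2, h4⟩ := Prod.mk.inj h2
  have := hinj _ (Nat.mod_lt _ hl) _ (Nat.mod_lt _ hl) (h3.symm.trans h4)
  have hts : t = s := by
    rcases Nat.lt_or_ge (t + 1) l with h5 | h5 <;> rcases Nat.lt_or_ge (s + 1) l with h6 | h6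
    · rw [Nat.mod_eq_of_lt h5, Nat.mod_eq_of_lt h6] at this; omega
    · rw [Nat.mod_eq_of_lt h5, show s + 1 = l by omega, Nat.mod_self] at this; omega
    · rw [Nat.mod_eq_of_lt h6, show t + 1 = l by omega, Nat.mod_self] at this; omega
    · omega
  rw [h1, h2, hts]

theorem aux_single_onCycle {V : Type*} {E : Set (V × V)} {C : Set V} (h : IsSingleCycleOn C E) :
    ∃ u ∈ C, OnCycle E u := by
  obtain ⟨l, w, hl, hinj, hset, hed⟩ := h
  refine ⟨w 0, hset ▸ ⟨0, hl, rfl⟩, l, fun t => w (t % l), hl, ⟨by simp, by simp, ?_⟩, ?_⟩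
  · intro t ht
    have := ((hed (w t, w ((t + 1) % l))).2 ⟨t, ht, rfl⟩).1
    simpa [Nat.mod_eq_of_lt ht] using this
  · intro s hs t ht he
    simp only [Nat.mod_eq_of_lt hs, Nat.mod_eq_of_lt ht] at he
    exact hinj s hs t ht he

/-- Lemma 2 of the paper: in a reduced graph, for every node `v` in
`V_p⁺` there is a unique path from the distinguished node `α_{p₀}` of the cycle `G_p`
to `v`, and every walk from `β` to `v` is the concatenation
`τ_{βα_{p₀}} ⬝ G_p^m ⬝ τ_{α_{p₀}v}` for some `m ∈ ℕ`; in particular its length is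
`dep(v) + m·ℓ_p`. Here `c` is the cycle `G_p` (of length `l`, starting and ending at
`p0 = α_{p₀}`, with node set `C`), and `pb` is the unique path from `β` to `p0`. -/
theorem stmt9 {n : ℕ} (hn : 1 ≤ n) (E : Set (Node n × Node n))
    (hred : ReducedGraph n E)
    (C : Set (Node n)) (hC : C ∈ SkelNodes E) (hCnontriv : (C, C) ∈ SkelEdges E)
    (l : ℕ) (c : ℕ → Node n) (p0 : Node n) (hp0C : p0 ∈ C)
    (hp0 : ∃ u ∈ CoreNodes n E, (u, p0) ∈ E)
    (hcyc : IsCycle E l c p0) (hcycset : {x | ∃ t < l, c t = x} = C)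
    (kb : ℕ) (pb : ℕ → Node n) (hpb : IsPath E kb pb (none : Node n) p0) :
    ∀ v : Node n, (∃ u ∈ C, Reachable E u v) →
      UniquePathFrom E p0 v ∧
      ∀ (k1 : ℕ) (p1 : ℕ → Node n), IsPath E k1 p1 p0 v →
        ∀ (k : ℕ) (w : ℕ → Node n), IsWalk E k w (none : Node n) v →
          ∃ m : ℕ, k = kb + m * l + k1 ∧
            ∀ t ≤ k, w t =
              if t ≤ kb then pb t
              else if t ≤ kb + m * l then c ((t - kb) % l)
              else p1 (t - (kb + m * l)) := by
  obtain ⟨⟨hbeta, -⟩, hT, -, hE, hN⟩ := hred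
  obtain ⟨u, hu, hup⟩ := hp0
  obtain ⟨hl, ⟨hc0, hcl, hcs⟩, hcinj⟩ := hcyc
  have hCs := (hN C hCnontriv).2
  have hCp : C = StrongComp E p0 := by
    obtain ⟨z, rfl⟩ := hC
    exact (aux_comp_eq hp0C).symm
  have hbeta' : ∀ y, (y, (none : Node n)) ∉ E := fun y h => hbeta _ h rfl
  have huC : u ∉ C := by
    intro h
    rw [hCp] at h
    exact hu.2 ⟨p0, ⟨l, c, hl, ⟨hc0, hcl, hcs⟩, hcinj⟩, h.1⟩
  have hcC : ∀ t < l, c t ∈ C := fun t ht => hcycset ▸ ⟨t, ht, rfl⟩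
  have hloop : C ∈ CycSucc (SkelEdges E) :=
    ⟨C, ⟨1, fun _ => C, le_rfl, ⟨rfl, rfl, fun _ _ => hCnontriv⟩, by intros; omega⟩, aux_refl _ _⟩
  -- in-neighbour facts
  have hself : ∀ x y, (y, x) ∈ E → y ∈ StrongComp E x →
      (StrongComp E x, StrongComp E x) ∈ SkelEdges E := by
    intro x y h hy
    have := aux_skel_edge h
    rwa [aux_comp_eq hy] at this
  have hpredcore : ∀ x y, (y, x) ∈ E → x ∈ CoreNodes n E → y ∈ CoreNodes n E := by
    rintro x y h ⟨-, hx⟩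
    refine ⟨trivial, ?_⟩
    rintro ⟨z, hz, hzy⟩
    exact hx ⟨z, hz, aux_step hzy h⟩
  have F2 : ∀ x ∈ CoreNodes n E, ∀ y y', (y, x) ∈ E → (y', x) ∈ E → y = y' := by
    intro x hx y y' h h'
    have hn : ∀ z, (z, x) ∈ E → z ∉ StrongComp E x := by
      intro z hz hzx
      obtain ⟨a, ha, hac⟩ := aux_single_onCycle (hN _ (hself x z hz hzx)).2
      exact hx.2 ⟨a, hac, ha.2⟩
    exact (aux_indeg hT hE h h' (aux_mem E x) (hn y h) (hn y' h')).1
  have F1 : ∀ x, Reachable E p0 x → x ≠ p0 → ∀ y y', (y, x) ∈ E → (y', x) ∈ E → y = y' := by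
    intro x hx hxp y y' h h'
    by_cases hxC : x ∈ C
    · have hin : ∀ z, (z, x) ∈ E → z ∈ C := by
        intro z hz
        by_contra hzC
        rw [hCp] at hzC hxC huC
        exact hxp (aux_indeg hT hE hup hz hxC huC hzC).2.symm
      exact aux_single_pred hCs hxC (hin y h) (hin y' h') h h'
    · have hn : ∀ z, (z, x) ∈ E → z ∉ StrongComp E x := by
        intro z hz hzx
        have hD := hself x z hz hzx
        obtain ⟨C', hC', hC'D⟩ := (hN _ hD).1
        have hne : C' ≠ StrongComp E x := by
          rintro rfl
          exact hC'.2 ⟨_, ⟨1, fun _ => StrongComp E x, le_rfl, ⟨rfl, rfl, fun _ _ => hD⟩,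
            by intros; omega⟩, aux_refl _ _⟩
        obtain ⟨⟨a0, ha0⟩, -, a, ha, b, hb, hab⟩ := hC'D
        simp only at ha0 ha hb
        subst ha0
        have haD : a ∉ StrongComp E x := by
          intro h
          exact hne ((aux_comp_eq ha).symm.trans (aux_comp_eq h))
        have hp0D : p0 ∉ StrongComp E x := by
          intro h
          apply hxC
          rw [hCp, aux_comp_eq h]
          exact aux_mem E x
        obtain ⟨a', b', hab', ha'D, hb'D, hpa'⟩ := aux_enter hx hp0D (aux_mem E x)
        have hbb : b' ∈ StrongComp E b := by rw [aux_comp_eq hb]; exact hb'D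
        obtain ⟨rfl, -⟩ := aux_indeg hT hE hab hab' hbb (by rwa [aux_comp_eq hb])
          (by rwa [aux_comp_eq hb])
        apply hC'.2
        obtain ⟨q, hq, hqr⟩ := hloop
        refine ⟨q, hq, aux_trans hqr ?_⟩
        rw [← aux_comp_eq ha, hCp]
        exact aux_skel_reach hpa'
      exact (aux_indeg hT hE h h' (aux_mem E x) (hn y h) (hn y' h')).1
  have F3 : ∀ y, (y, p0) ∈ E → y ∉ C → y = u := by
    intro y h hy
    rw [hCp] at hy huC
    exact (aux_indeg hT hE h hup (aux_mem E p0) hy huC).1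
  have hlast : (c (l - 1), p0) ∈ E := by
    have := hcs (l - 1) (by omega)
    rwa [show l - 1 + 1 = l by omega, hcl] at this
  have hne0 : p0 ≠ none := by
    rintro rfl
    exact hbeta' _ hup
  -- walks arriving at p0 through C
  have hviaC : ∀ k w, IsWalk E k w (none : Node n) p0 → 0 < k → w (k - 1) ∈ C →
      l ≤ k ∧ ∀ j ≤ l, w (k - j) = c (l - j) := by
    rintro k w ⟨h0, hk, hs⟩ hk0 hkC
    have hE1 : (w (k - 1), p0) ∈ E := by
      have := hs (k - 1) (by omega)
      rwa [show k - 1 + 1 = k by omega, hk] at this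
    have e1 : w (k - 1) = c (l - 1) :=
      aux_single_pred hCs hp0C hkC (hcC _ (by omega)) hE1 hlast
    have hb : ∀ N, N ≤ k - 1 → N ≤ l - 1 → ∀ j ≤ N, w (k - 1 - j) = c (l - 1 - j) := by
      intro N hN1 hN2
      refine aux_back (fun t ht => hs t (by omega)) (fun t ht => hcs t (by omega)) e1 hN1 hN2 ?_
      intro j hj
      refine F1 _ ?_ ?_
      · rw [← hc0]; exact aux_walk_reach hcs (Nat.zero_le _) (by omega)
      · intro h
        have := hcinj (l - 1 - j) (by omega) 0 (by omega) (h.trans hc0.symm)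
        omega
    have hlk : l ≤ k := by
      by_contra hlt
      have := hb (k - 1) le_rfl (by omega) (k - 1) le_rfl
      rw [Nat.sub_self, h0] at this
      have h2 := hcs (l - 1 - (k - 1) - 1) (by omega)
      rw [show l - 1 - (k - 1) - 1 + 1 = l - 1 - (k - 1) by omega, ← this] at h2
      exact hbeta' _ h2
    refine ⟨hlk, ?_⟩
    intro j hj
    rcases Nat.eq_zero_or_pos j with rfl | hj0
    · simp [hk, hcl]
    · have := hb (l - 1) (by omega) le_rfl (j - 1) (by omega)
      rwa [show k - 1 - (j - 1) = k - j by omega, show l - 1 - (j - 1) = l - j by omega] at this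
  have hpos : ∀ k w, IsWalk E k w (none : Node n) p0 → 0 < k := by
    rintro k w ⟨h0, hk, -⟩
    rcases Nat.eq_zero_or_pos k with rfl | h
    · exact absurd (hk.symm.trans h0) hne0
    · exact h
  have hkb := hpos kb pb hpb.1
  have hlastE : ∀ k w, IsWalk E k w (none : Node n) p0 → (w (k - 1), p0) ∈ E := by
    intro k w h
    have h1 := hpos k w h
    have := h.2.2 (k - 1) (by omega)
    rwa [show k - 1 + 1 = k by omega, h.2.1] at this
  have hpbu : pb (kb - 1) = u := by
    apply F3 _ (hlastE _ _ hpb.1)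
    intro h
    obtain ⟨h1, h2⟩ := hviaC kb pb hpb.1 hkb h
    have h3 := h2 l le_rfl
    rw [Nat.sub_self, hc0, ← hpb.1.2.1] at h3
    have := hpb.2 _ (by omega) _ le_rfl h3
    omega
  have hpbcore : ∀ j ≤ kb - 1, pb (kb - 1 - j) ∈ CoreNodes n E := by
    intro j
    induction j with
    | zero => intro _; simpa [hpbu] using hu
    | succ j ih =>
      intro hj
      have h2 := hpb.1.2.2 (kb - 1 - (j + 1)) (by omega)
      rw [show kb - 1 - (j + 1) + 1 = kb - 1 - j by omega] at h2
      exact hpredcore _ _ h2 (ih (by omega))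
  have claim2 : ∀ k w, IsWalk E k w (none : Node n) p0 → ∃ m, k = kb + m * l ∧
      ∀ t ≤ k, w t = if t ≤ kb then pb t else c ((t - kb) % l) := by
    intro k
    induction k using Nat.strong_induction_on with
    | _ k ih =>
    intro w hw
    have hk0 := hpos k w hw
    by_cases hkC : w (k - 1) ∈ C
    · obtain ⟨hlk, hj⟩ := hviaC k w hw hk0 hkC
      have hw' : IsWalk E (k - l) w none p0 := by
        refine ⟨hw.1, ?_, fun t ht => hw.2.2 t (by omega)⟩
        rw [hj l le_rfl, Nat.sub_self, hc0]
      obtain ⟨m, hm, hval⟩ := ih (k - l) (by omega) w hw'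
      refine ⟨m + 1, by rw [Nat.add_mul]; omega, ?_⟩
      intro t ht
      rcases Nat.lt_or_ge (k - l) t with h | h
      · have h1 := hj (k - t) (by omega)
        rw [show k - (k - t) = t by omega] at h1
        rw [if_neg (by omega), h1, show t - kb = (l - (k - t)) + m * l by omega,
          Nat.add_mul_mod_self_right]
        rcases Nat.lt_or_ge (l - (k - t)) l with h2 | h2
        · rw [Nat.mod_eq_of_lt h2]
        · rw [show l - (k - t) = l by omega, Nat.mod_self, hcl, hc0]
      · exact hval t h
    · have hwu : w (k - 1) = pb (kb - 1) := by
        rw [hpbu]; exact F3 _ (hlastE _ _ hw) hkC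
      have hb : ∀ N, N ≤ k - 1 → N ≤ kb - 1 → ∀ j ≤ N, w (k - 1 - j) = pb (kb - 1 - j) := by
        intro N hN1 hN2
        refine aux_back (fun t ht => hw.2.2 t (by omega)) (fun t ht => hpb.1.2.2 t (by omega))
          hwu hN1 hN2 ?_
        intro j hj
        exact F2 _ (hpbcore j (by omega))
      have hkk : k = kb := by
        rcases lt_trichotomy k kb with h | h | h
        · exfalso
          have := hb (k - 1) le_rfl (by omega) (k - 1) le_rfl
          rw [Nat.sub_self, hw.1] at this
          have h2 := hpb.1.2.2 (kb - 1 - (k - 1) - 1) (by omega)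
          rw [show kb - 1 - (k - 1) - 1 + 1 = kb - 1 - (k - 1) by omega, ← this] at h2
          exact hbeta' _ h2
        · exact h
        · exfalso
          have := hb (kb - 1) (by omega) le_rfl (kb - 1) le_rfl
          rw [Nat.sub_self, hpb.1.1] at this
          have h2 := hw.2.2 (k - 1 - (kb - 1) - 1) (by omega)
          rw [show k - 1 - (kb - 1) - 1 + 1 = k - 1 - (kb - 1) by omega, this] at h2
          exact hbeta' _ h2
      subst hkk
      refine ⟨0, by simp, ?_⟩
      intro t ht
      rw [if_pos ht]
      rcases Nat.lt_or_ge t k with h | h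
      · have := hb (k - 1) le_rfl le_rfl (k - 1 - t) (by omega)
        rwa [show k - 1 - (k - 1 - t) = t by omega] at this
      · obtain rfl : t = k := by omega
        rw [hw.2.1, hpb.1.2.1]
  -- paths from p0
  have hpathback : ∀ (v : Node n) k1 p1, IsPath E k1 p1 p0 v → ∀ (k : ℕ) (w : ℕ → Node n),
      (∀ t < k, (w t, w (t + 1)) ∈ E) → w k = v → ∀ N, N ≤ k → N ≤ k1 →
      ∀ j ≤ N, w (k - j) = p1 (k1 - j) := by
    intro v k1 p1 hp k w hs hk N hN1 hN2
    refine aux_back hs hp.1.2.2 (hk.trans hp.1.2.1.symm) hN1 hN2 ?_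
    intro j hj
    refine F1 _ ?_ ?_
    · rw [← hp.1.1]; exact aux_walk_reach hp.1.2.2 (Nat.zero_le _) (by omega)
    · intro h
      have := hp.2 (k1 - j) (by omega) 0 (by omega) (h.trans hp.1.1.symm)
      omega
  have hle : ∀ (v : Node n) k1 p1, IsPath E k1 p1 p0 v → ∀ k' p', IsPath E k' p' p0 v →
      k1 ≤ k' := by
    intro v k1 p1 hp k' p' hp'
    by_contra hlt
    have := hpathback v k1 p1 hp k' p' hp'.1.2.2 hp'.1.2.1 k' le_rfl (by omega) k' le_rfl
    rw [Nat.sub_self, hp'.1.1, ← hp.1.1] at this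
    have := hp.2 0 (by omega) _ (by omega) this
    omega
  rintro v ⟨z, hz, hzv⟩
  have hpv : Reachable E p0 v := by
    rw [hCp] at hz
    exact aux_trans hz.1 hzv
  refine ⟨⟨aux_path hpv, ?_⟩, ?_⟩
  · intro k w k' w' hp hp'
    have hkk : k = k' := le_antisymm (hle v k w hp k' w' hp') (hle v k' w' hp' k w hp)
    subst hkk
    refine ⟨rfl, fun t ht => ?_⟩
    have := hpathback v k w' hp' k w hp.1.2.2 hp.1.2.1 k le_rfl le_rfl (k - t) (by omega)
    rwa [show k - (k - t) = t by omega] at this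
  · intro k1 p1 hp k w hw
    have hb := hpathback v k1 p1 hp k w hw.2.2 hw.2.1
    have hk1 : k1 ≤ k := by
      by_contra hlt
      have := hb k le_rfl (by omega) k le_rfl
      rw [Nat.sub_self, hw.1] at this
      have h2 := hp.1.2.2 (k1 - k - 1) (by omega)
      rw [show k1 - k - 1 + 1 = k1 - k by omega, ← this] at h2
      exact hbeta' _ h2
    have hb := hb k1 hk1 le_rfl
    obtain ⟨m, hm, hval⟩ := claim2 (k - k1) w
      ⟨hw.1, by rw [hb k1 le_rfl, Nat.sub_self, hp.1.1], fun t ht => hw.2.2 t (by omega)⟩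
    refine ⟨m, by omega, ?_⟩
    intro t ht
    rcases Nat.lt_or_ge (k - k1) t with h | h
    · rw [if_neg (by omega), if_neg (by omega)]
      have := hb (k - t) (by omega)
      rw [show k - (k - t) = t by omega] at this
      rw [this]; congr 1; omega
    · rw [hval t h]
      split_ifs <;> first | rfl | omega
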